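/- Let V be an 𝔽_q-vector space of dimension n and x ∈ End(V) a nilpotent endomorphism of Jordan type λ ⊢ n. Then the order of the centralizer of x in GL(V) equals q^{⟨λ,λ⟩}·∏_k ∏_{j=1}^{m_k(λ)} (1 − q^{-j}), where ⟨λ,λ⟩ = ∑_{i,j} min(i,j)·m_i(λ)·m_j(λ). -/

import Mathlib

/-- The pairing `⟨λ,μ⟩ = ∑_{i,j} min(i,j) mᵢ(λ) mⱼ(μ)`. -/
def partitionPairing (μ ν : Multiset ℕ) : ℕ :=
  (μ.map fun a => (ν.map fun b => min a b).sum).sum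

/-- A nilpotent endomorphism has Jordan type `λ` iff for every `k`,
`dim ker(x^k) = ∑_{parts p of λ} min(p,k)`. -/
def HasJordanType {K : Type*} [Field K] {V : Type*} [AddCommGroup V] [Module K V]
    {n : ℕ} (x : Module.End K V) (lam : Nat.Partition n) : Prop :=
  IsNilpotent x ∧
    ∀ k : ℕ, Module.finrank K (LinearMap.ker (x ^ k)) = (lam.parts.map fun p => min p k).sum


theorem aux_finrank_map {K V : Type*} [Field K] [AddCommGroup V] [Module K V]
    [FiniteDimensional K V] (f : V →ₗ[K] V) (B : Submodule K V) :
    Module.finrank K (B.map f) + Module.finrank K (B ⊓ LinearMap.ker f : Submodule K V)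
      = Module.finrank K B := by
  have h := LinearMap.finrank_range_add_finrank_ker (f.domRestrict B)
  rw [LinearMap.range_domRestrict, LinearMap.ker_domRestrict] at h
  rw [← h, ← Submodule.finrank_map_subtype_eq B, Submodule.map_comap_subtype]

theorem aux_card_step {K V : Type*} [Field K] [Fintype K] [AddCommGroup V] [Module K V]
    [FiniteDimensional K V] (f : V →ₗ[K] V) (A S : Submodule K V) (hS : S ≤ A.map f) :
    (Nat.card {v : V // v ∈ A ∧ f v ∉ S} : ℚ) =
      (Fintype.card K : ℚ) ^ Module.finrank K A -
      (Fintype.card K : ℚ) ^ (Module.finrank K (A ⊓ LinearMap.ker f : Submodule K V)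
        + Module.finrank K S) := by
  have hfin : Finite V := Module.finite_of_finite K
  have h1 := aux_finrank_map f (A ⊓ S.comap f)
  rw [← Submodule.map_inf_eq_map_inf_comap, inf_eq_right.2 hS] at h1
  have h2 : A ⊓ S.comap f ⊓ LinearMap.ker f = A ⊓ LinearMap.ker f := by
    ext v
    simp only [Submodule.mem_inf, Submodule.mem_comap, LinearMap.mem_ker]
    constructor
    · rintro ⟨⟨a, b⟩, c⟩; exact ⟨a, c⟩
    · rintro ⟨a, c⟩; exact ⟨⟨a, by rw [c]; exact S.zero_mem⟩, c⟩
  rw [h2, add_comm] at h1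
  rw [h1]
  have e1 : ∀ B : Submodule K V, (Fintype.card K : ℚ) ^ Module.finrank K B
      = (((B : Set V).ncard : ℕ) : ℚ) := by
    intro B
    rw [← Nat.card_coe_set_eq, ← Nat.card_eq_fintype_card (α := K)]
    have := Module.natCard_eq_pow_finrank (K := K) (V := B)
    rw [SetLike.coe_sort_coe, this]
    push_cast; rfl
  rw [e1, e1]
  have e2 : (Nat.card {v : V // v ∈ A ∧ f v ∉ S}) =
      ((A : Set V) \ ((A ⊓ S.comap f : Submodule K V) : Set V)).ncard := by
    rw [← Nat.card_coe_set_eq]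
    apply Nat.card_congr
    apply Equiv.subtypeEquivRight
    intro v
    simp only [Set.mem_sdiff, SetLike.mem_coe, Submodule.mem_inf, Submodule.mem_comap]
    tauto
  rw [e2, eq_sub_iff_add_eq]
  have := Set.ncard_sdiff_add_ncard_of_subset
    (s := ((A ⊓ S.comap f : Submodule K V) : Set V)) (t := (A : Set V))
    (fun v hv => hv.1) (Set.toFinite _)
  exact_mod_cast this

theorem aux_card_tuples {K V : Type*} [Field K] [Fintype K] [AddCommGroup V] [Module K V]
    [FiniteDimensional K V] (r : ℕ) (f : Fin r → V →ₗ[K] V) (A : Fin r → Submodule K V)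
    (hmono : Monotone fun i => (A i).map (f i)) :
    (Nat.card {v : Fin r → V // (∀ i, v i ∈ A i) ∧ LinearIndependent K (fun i => f i (v i))} : ℚ)
      = ∏ i, ((Fintype.card K : ℚ) ^ Module.finrank K (A i) -
        (Fintype.card K : ℚ) ^ (Module.finrank K (A i ⊓ LinearMap.ker (f i) : Submodule K V)
          + (i : ℕ))) := by
  have hfin : Finite V := Module.finite_of_finite K
  induction r with
  | zero =>
    rw [Fin.prod_univ_zero, Nat.cast_eq_one, Nat.card_eq_one_iff_unique]
    refine ⟨⟨fun a b => Subtype.ext (Subsingleton.elim _ _)⟩, ⟨⟨fun i => i.elim0, fun i => i.elim0, ?_⟩⟩⟩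
    exact linearIndependent_empty_type
  | succ r ih =>
    rw [Fin.prod_univ_castSucc]
    have ih' := ih (fun i => f i.castSucc) (fun i => A i.castSucc)
      (fun i j hij => hmono (Fin.castSucc_le_castSucc_iff.2 hij))
    simp only [Fin.val_castSucc]
    rw [← ih']
    set T := {v : Fin r → V // (∀ i, v i ∈ A i.castSucc) ∧
      LinearIndependent K (fun i => f i.castSucc (v i))} with hT
    have hTf : Fintype T := Fintype.ofFinite _
    have hkey : ∀ (u : Fin r → V) (w : V), (fun i => f i (Fin.snoc (α := fun _ => V) u w i)) =
        Fin.snoc (α := fun _ => V) (fun i => f i.castSucc (u i)) (f (Fin.last r) w) := by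
      intro u w
      funext i
      refine Fin.lastCases ?_ (fun i => ?_) i <;> simp
    let e : {v : Fin (r+1) → V // (∀ i, v i ∈ A i) ∧ LinearIndependent K (fun i => f i (v i))} ≃
        Σ u : T, {w : V // w ∈ A (Fin.last r) ∧
          f (Fin.last r) w ∉ Submodule.span K (Set.range fun i => f i.castSucc (u.1 i))} :=
      { toFun := fun v =>
          have hli := linearIndependent_finSnoc.1 (by
              rw [← hkey (Fin.init v.1) (v.1 (Fin.last r)), Fin.snoc_init_self]; exact v.2.2)
          ⟨⟨Fin.init v.1, fun i => v.2.1 _, hli.1⟩, ⟨v.1 (Fin.last r), v.2.1 _, hli.2⟩⟩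
        invFun := fun p => ⟨Fin.snoc (α := fun _ => V) p.1.1 p.2.1, by
          intro i
          refine Fin.lastCases ?_ (fun i => ?_) i
          · simpa using p.2.2.1
          · simpa using p.1.2.1 i, by
          rw [hkey]
          exact linearIndependent_finSnoc.2 ⟨p.1.2.2, p.2.2.2⟩⟩
        left_inv := fun v => Subtype.ext (by simp)
        right_inv := by
          rintro ⟨⟨u, hu⟩, ⟨w, hw⟩⟩
          have h1 : Fin.init (Fin.snoc (α := fun _ => V) u w) = u := by simp
          have h2 : Fin.snoc (α := fun _ => V) u w (Fin.last r) = w := by simp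
          refine Sigma.subtype_ext (Subtype.ext ?_) ?_
          · exact h1
          · exact h2 }
    rw [Nat.card_congr e, Nat.card_sigma]
    push_cast
    rw [Finset.sum_congr rfl (g := fun _ => (Fintype.card K : ℚ) ^ Module.finrank K (A (Fin.last r)) -
        (Fintype.card K : ℚ) ^ (Module.finrank K
          (A (Fin.last r) ⊓ LinearMap.ker (f (Fin.last r)) : Submodule K V) + r))]
    · rw [Finset.sum_const, nsmul_eq_mul, Finset.card_univ, Nat.card_eq_fintype_card]
    · intro u _
      rw [aux_card_step, finrank_span_eq_card u.2.2, Fintype.card_fin]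
      rw [Submodule.span_le]
      rintro _ ⟨i, rfl⟩
      exact hmono (Fin.le_last i.castSucc) (Submodule.mem_map_of_mem (u.2.1 i))

theorem aux_linInd {K V : Type*} [Field K] [AddCommGroup V] [Module K V]
    (x : Module.End K V) {r : ℕ} (p : Fin r → ℕ) (v : Fin r → V)
    (hv : ∀ i, v i ∈ LinearMap.ker (x ^ p i))
    (hli : LinearIndependent K (fun i => (x ^ (p i - 1)) (v i))) :
    LinearIndependent K (fun s : Σ i : Fin r, Fin (p i) => (x ^ (s.2 : ℕ)) (v s.1)) := by
  rw [Fintype.linearIndependent_iff] at hli ⊢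
  intro c hc
  have hz : ∀ i k, p i ≤ k → (x ^ k) (v i) = 0 := by
    intro i k hk
    rw [← Nat.sub_add_cancel hk, pow_add, Module.End.mul_apply, LinearMap.mem_ker.1 (hv i), map_zero]
  have hmain : ∀ N t : ℕ, (∑ i, p i) ≤ N + t → ∀ (i : Fin r) (j : Fin (p i)), j + t < p i →
      c ⟨i, j⟩ = 0 := by
    intro N
    induction N with
    | zero =>
      intro t ht i j hj
      have := Finset.single_le_sum (f := p) (fun _ _ => Nat.zero_le _) (Finset.mem_univ i)
      omega
    | succ N ih =>
      intro t ht i j hj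
      have ih' := ih (t+1) (by omega)
      rcases Nat.lt_or_ge (j + (t + 1)) (p i) with h1 | h1
      · exact ih' i j h1
      have hjt : (j : ℕ) = p i - 1 - t := by omega
      let d : Fin r → K := fun i => if h : t < p i then c ⟨i, ⟨p i - 1 - t, by omega⟩⟩ else 0
      have hd : ∑ i, d i • (x ^ (p i - 1)) (v i) = 0 := by
        have h2 := congrArg (x ^ t) hc
        rw [map_zero, map_sum, Fintype.sum_sigma] at h2
        rw [← h2]
        refine Finset.sum_congr rfl fun a _ => ?_
        by_cases ha : t < p a
        · rw [Finset.sum_eq_single (⟨p a - 1 - t, by omega⟩ : Fin (p a))]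
          · simp only [d, dif_pos ha]
            rw [map_smul, ← Module.End.mul_apply, ← pow_add]
            congr 3
            omega
          · intro b _ hb
            have hb' : (b : ℕ) ≠ p a - 1 - t := fun h => hb (Fin.ext h)
            rw [map_smul, ← Module.End.mul_apply, ← pow_add]
            have hbl := b.2
            rcases Nat.lt_or_ge (b + (t + 1)) (p a) with h3 | h3
            · rw [ih' a b h3, zero_smul]
            · rw [hz a _ (by simp only; omega), smul_zero]
          · intro h; exact absurd (Finset.mem_univ _) h
        · simp only [d, dif_neg ha, zero_smul]
          symm
          refine Finset.sum_eq_zero fun b _ => ?_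
          rw [map_smul, ← Module.End.mul_apply, ← pow_add, hz a _ (by omega), smul_zero]
      have h4 := hli d hd i
      have hti : t < p i := by omega
      simp only [d, dif_pos hti] at h4
      rw [← h4]
      congr 2
      exact Fin.ext hjt
  rintro ⟨i, j⟩
  exact hmain (∑ i, p i) 0 (by omega) i j (by simp)

theorem aux_card_centralizer {K V : Type*} [Field K] [AddCommGroup V] [Module K V]
    [FiniteDimensional K V]
    (x : Module.End K V) {r : ℕ} (p : Fin r → ℕ) (hp : ∀ i, 0 < p i)
    (hsum : ∑ i, p i = Module.finrank K V) (T : Set (Fin r → V))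
    (hT : T = {v | (∀ i, v i ∈ LinearMap.ker (x ^ p i)) ∧
      LinearIndependent K (fun i => (x ^ (p i - 1)) (v i))})
    (e : Fin r → V) (he : e ∈ T) :
    Nat.card {g : V ≃ₗ[K] V // g.toLinearMap ∘ₗ x = x ∘ₗ g.toLinearMap} = Nat.card T := by
  have hpow : ∀ g : V ≃ₗ[K] V, g.toLinearMap ∘ₗ x = x ∘ₗ g.toLinearMap →
      ∀ k w, (x ^ k) (g w) = g ((x ^ k) w) := by
    intro g hg k
    induction k with
    | zero => intro w; simp
    | succ k ih =>
      intro w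
      have h0 : g (x w) = x (g w) := LinearMap.congr_fun hg w
      rw [pow_succ, Module.End.mul_apply, Module.End.mul_apply, ← h0, ih]
  have hcard : Fintype.card (Σ i : Fin r, Fin (p i)) = Module.finrank K V := by
    simp [hsum]
  have hB : ∀ v ∈ T, ∃ b : Module.Basis (Σ i : Fin r, Fin (p i)) K V,
      ∀ s, b s = (x ^ (s.2 : ℕ)) (v s.1) := by
    intro v hv
    rw [hT] at hv
    have hli := aux_linInd x p v hv.1 hv.2
    refine ⟨Module.Basis.mk hli (hli.span_eq_top_of_card_eq_finrank' hcard).ge, fun s => ?_⟩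
    rw [Module.Basis.mk_apply]
  obtain ⟨b, hb⟩ := hB e he
  have hz : ∀ v ∈ T, ∀ i, (x ^ p i) (v i) = 0 := by
    intro v hv i
    rw [hT] at hv
    exact LinearMap.mem_ker.1 (hv.1 i)
  have he2 := he
  rw [hT] at he2
  let φ : {g : V ≃ₗ[K] V // g.toLinearMap ∘ₗ x = x ∘ₗ g.toLinearMap} → T := fun g =>
    ⟨fun i => g.1 (e i), by
      rw [hT]
      refine ⟨fun i => ?_, ?_⟩
      · rw [LinearMap.mem_ker, hpow g.1 g.2, hz e he, map_zero]
      · have := he2.2.map' g.1.toLinearMap g.1.ker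
        have h5 : (fun i => (x ^ (p i - 1)) (g.1 (e i))) =
            g.1.toLinearMap ∘ fun i => (x ^ (p i - 1)) (e i) :=
          funext fun i => hpow g.1 g.2 _ _
        rw [h5]
        exact this⟩
  refine Nat.card_congr (Equiv.ofBijective φ ⟨?_, ?_⟩)
  · intro g g' hgg
    have h1 : ∀ i, g.1 (e i) = g'.1 (e i) := fun i => congrFun (congrArg Subtype.val hgg) i
    apply Subtype.ext
    apply LinearEquiv.toLinearMap_injective
    refine b.ext fun s => ?_
    rw [hb]
    change g.1 _ = g'.1 _
    rw [← hpow g.1 g.2, ← hpow g'.1 g'.2, h1]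
  · rintro ⟨v, hv⟩
    obtain ⟨b', hb'⟩ := hB v hv
    let g := b.equiv b' (Equiv.refl _)
    have hg : ∀ i j, j < p i → g ((x ^ j) (e i)) = (x ^ j) (v i) := by
      intro i j hj
      have := b.equiv_apply ⟨i, ⟨j, hj⟩⟩ b' (Equiv.refl _)
      rw [hb, Equiv.refl_apply, hb'] at this
      exact this
    refine ⟨⟨g, ?_⟩, ?_⟩
    · refine b.ext fun s => ?_
      rw [hb]
      change g (x _) = x (g _)
      obtain ⟨i, j, hj⟩ := s
      simp only
      rw [hg i j hj, ← Module.End.mul_apply, ← Module.End.mul_apply, ← pow_succ']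
      rcases Nat.lt_or_ge (j + 1) (p i) with h1 | h1
      · exact hg i _ h1
      · have : j + 1 = p i := by omega
        rw [this, hz e he, hz v hv, map_zero]
    · apply Subtype.ext
      funext i
      have := hg i 0 (hp i)
      simpa using this

theorem aux_count {r : ℕ} (p : Fin r → ℕ) (hp : Antitone p) (i : Fin r) :
    (Finset.univ.filter fun j => p i ≤ p j).card =
      (i : ℕ) + 1 + (Finset.univ.filter fun j => i < j ∧ p j = p i).card := by
  rw [← Fin.card_Iic, ← Finset.card_union_of_disjoint]
  · congr 1
    ext j
    simp only [Finset.mem_filter, Finset.mem_univ, true_and, Finset.mem_union, Finset.mem_Iic]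
    constructor
    · intro h
      rcases le_or_gt j i with h1 | h1
      · exact Or.inl h1
      · exact Or.inr ⟨h1, le_antisymm (hp h1.le) h⟩
    · rintro (h | h)
      · exact hp h
      · exact h.2.ge
  · rw [Finset.disjoint_left]
    intro j h1 h2
    simp only [Finset.mem_filter, Finset.mem_univ, true_and, Finset.mem_Iic] at h1 h2
    exact absurd h1 (not_le.2 h2.1)

theorem aux_prod {r : ℕ} (p : Fin r → ℕ) (k : ℕ) (F : ℕ → ℚ) :
    ∏ i with p i = k, F ((Finset.univ.filter fun j => i < j ∧ p j = p i).card) =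
      ∏ j ∈ Finset.range (Finset.univ.filter fun i => p i = k).card, F j := by
  have hlt : ∀ a b : Fin r, p a = k → p b = k → a < b →
      (Finset.univ.filter fun j => b < j ∧ p j = p b).card <
      (Finset.univ.filter fun j => a < j ∧ p j = p a).card := by
    intro a b ha hb hab
    apply Finset.card_lt_card
    rw [Finset.ssubset_iff_of_subset]
    · exact ⟨b, by simp [hab, ha, hb], by simp⟩
    · intro j
      simp only [Finset.mem_filter, Finset.mem_univ, true_and]
      rintro ⟨h1, h2⟩
      exact ⟨hab.trans h1, by rw [h2, ha, hb]⟩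
  have hinj : Set.InjOn (fun i => (Finset.univ.filter fun j => i < j ∧ p j = p i).card)
      ((Finset.univ.filter fun i => p i = k : Finset (Fin r)) : Set (Fin r)) := by
    intro a ha b hb hab
    simp only [Finset.coe_filter, Finset.mem_univ, true_and, Set.mem_ofPred_eq] at ha hb hab
    rcases lt_trichotomy a b with h | h | h
    · have := hlt a b ha hb h; omega
    · exact h
    · have := hlt b a hb ha h; omega
  rw [← Finset.prod_image (g := fun i => (Finset.univ.filter fun j => i < j ∧ p j = p i).card) hinj]
  congr 1
  apply Finset.eq_of_subset_of_card_le
  · intro m hm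
    rw [Finset.mem_image] at hm
    obtain ⟨a, ha, rfl⟩ := hm
    simp only [Finset.mem_filter, Finset.mem_univ, true_and] at ha
    rw [Finset.mem_range]
    apply Finset.card_lt_card
    rw [Finset.ssubset_iff_of_subset]
    · exact ⟨a, by simp [ha], by simp⟩
    · intro j
      simp only [Finset.mem_filter, Finset.mem_univ, true_and]
      rintro ⟨h1, h2⟩
      rw [h2, ha]
  · rw [Finset.card_image_of_injOn hinj, Finset.card_range]

/-- The order of the centralizer in `GL(V)` of a nilpotent endomorphism of Jordan type `λ`
equals `q^{⟨λ,λ⟩} ∏_k ∏_{j=1}^{m_k(λ)} (1 − q^{-j})`. -/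
theorem card_centralizer_nilpotent
    (K : Type*) [Field K] [Fintype K]
    (V : Type*) [AddCommGroup V] [Module K V] [FiniteDimensional K V]
    (n : ℕ) (h : Module.finrank K V = n)
    (lam : Nat.Partition n)
    (x : Module.End K V) (hx : HasJordanType x lam) :
    (Nat.card {g : V ≃ₗ[K] V //
        g.toLinearMap ∘ₗ x = x ∘ₗ g.toLinearMap} : ℚ) =
      (Fintype.card K : ℚ) ^ partitionPairing lam.parts lam.parts *
        ∏ k ∈ Finset.range (n + 1), ∏ j ∈ Finset.range (lam.parts.count k),
          (1 - ((Fintype.card K : ℚ))⁻¹ ^ (j + 1)) := by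
  obtain ⟨r, p, hanti, hparts⟩ : ∃ (r : ℕ) (p : Fin r → ℕ), Antitone p ∧
      lam.parts = (Finset.univ : Finset (Fin r)).val.map p := by
    let l := lam.parts.sort (· ≥ ·)
    refine ⟨l.length, l.get, ?_, ?_⟩
    · have hs : List.Pairwise (· ≥ ·) l := Multiset.pairwise_sort _ _
      intro a b hab
      rcases hab.eq_or_lt with h1 | h1
      · rw [h1]
      · exact List.pairwise_iff_get.1 hs a b h1
    · rw [Fin.univ_val_map, List.ofFn_get]
      exact (Multiset.sort_eq _ _).symm
  have hsumm : ∀ F : ℕ → ℕ, (lam.parts.map F).sum = ∑ i, F (p i) := by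
    intro F
    rw [hparts, Multiset.map_map]; rfl
  have hp : ∀ i, 0 < p i := by
    intro i
    apply lam.parts_pos
    rw [hparts]
    exact Multiset.mem_map_of_mem _ (Finset.mem_univ_val i)
  have hsum : ∑ i, p i = n := by
    rw [← hsumm fun k => k, Multiset.map_id', lam.parts_sum]
  have hker : ∀ k, Module.finrank K (LinearMap.ker (x ^ k)) = ∑ i, min (p i) k := by
    intro k; rw [hx.2 k, hsumm]
  have hinf : ∀ k, LinearMap.ker (x ^ k) ⊓ LinearMap.ker (x ^ (k - 1)) = LinearMap.ker (x ^ (k - 1)) := by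
    intro k
    rw [inf_eq_right]
    intro w hw
    have h1 : k = (k - (k - 1)) + (k - 1) := by omega
    rw [LinearMap.mem_ker] at hw ⊢
    rw [h1, pow_add, Module.End.mul_apply, hw, map_zero]
  have hmono : Monotone fun i => (LinearMap.ker (x ^ p i)).map (x ^ (p i - 1)) := by
    intro i j hij
    rintro _ ⟨w, hw, rfl⟩
    have hle := hanti hij
    have hi := hp i
    have hj := hp j
    refine ⟨(x ^ (p i - p j)) w, ?_, ?_⟩
    · simp only [SetLike.mem_coe, LinearMap.mem_ker] at hw ⊢
      rw [← Module.End.mul_apply, ← pow_add, show p j + (p i - p j) = p i by omega, hw]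
    · rw [← Module.End.mul_apply, ← pow_add, show p j - 1 + (p i - p j) = p i - 1 by omega]
  have hcount := aux_card_tuples r (fun i => x ^ (p i - 1)) (fun i => LinearMap.ker (x ^ p i)) hmono
  have hinf2 : ∀ k, Module.finrank K
      (LinearMap.ker (x ^ k) ⊓ LinearMap.ker (x ^ (k - 1)) : Submodule K V) =
      Module.finrank K (LinearMap.ker (x ^ (k - 1))) := by
    intro k
    rw [hinf k]
  simp only [hinf2] at hcount
  set q : ℚ := (Fintype.card K : ℚ) with hq
  have hq1 : 1 < q := by
    rw [hq]; exact_mod_cast Fintype.one_lt_card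
  have hq0 : q ≠ 0 := by positivity
  let t : Fin r → ℕ := fun i => (Finset.univ.filter fun j => i < j ∧ p j = p i).card
  have hstep : ∀ i, Module.finrank K (LinearMap.ker (x ^ p i)) =
      Module.finrank K (LinearMap.ker (x ^ (p i - 1))) + (i : ℕ) + (t i + 1) := by
    intro i
    have h1 := aux_count p hanti i
    rw [hker, hker]
    have h2 : ∑ j, min (p j) (p i) = ∑ j, min (p j) (p i - 1) +
        (Finset.univ.filter fun j => p i ≤ p j).card := by
      rw [Finset.card_filter, ← Finset.sum_add_distrib]
      refine Finset.sum_congr rfl fun j _ => ?_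
      have := hp i
      split_ifs <;> omega
    rw [h2, h1]
    simp only [t]
    omega
  have hfac : ∀ i : Fin r, q ^ Module.finrank K (LinearMap.ker (x ^ p i)) -
      q ^ (Module.finrank K (LinearMap.ker (x ^ (p i - 1))) + (i : ℕ)) =
      q ^ Module.finrank K (LinearMap.ker (x ^ p i)) * (1 - q⁻¹ ^ (t i + 1)) := by
    intro i
    rw [hstep i, pow_add _ _ (t i + 1), mul_sub, mul_one, mul_assoc, ← mul_pow,
      mul_inv_cancel₀ hq0, one_pow, mul_one]
  rw [Finset.prod_congr rfl fun i _ => hfac i] at hcount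
  have hpos : (0 : ℚ) < ∏ i : Fin r, q ^ Module.finrank K (LinearMap.ker (x ^ p i)) *
      (1 - q⁻¹ ^ (t i + 1)) := by
    refine Finset.prod_pos fun i _ => mul_pos (by positivity) ?_
    rw [sub_pos]
    exact pow_lt_one₀ (by positivity) (inv_lt_one_of_one_lt₀ hq1) (by omega)
  rw [← hcount] at hpos
  have hne : Nat.card {v : Fin r → V // (∀ i, v i ∈ LinearMap.ker (x ^ p i)) ∧
      LinearIndependent K (fun i => (x ^ (p i - 1)) (v i))} ≠ 0 := by
    intro h0
    rw [h0] at hpos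
    simp at hpos
  obtain ⟨⟨e, he⟩⟩ := (Nat.card_ne_zero.1 hne).1
  rw [aux_card_centralizer x p hp (hsum.trans h.symm) _ rfl e he]
  refine hcount.trans ?_
  rw [Finset.prod_mul_distrib, Finset.prod_pow_eq_pow_sum]
  congr 1
  · congr 1
    rw [partitionPairing, hsumm]
    refine Finset.sum_congr rfl fun i _ => ?_
    rw [hker, hsumm]
    exact Finset.sum_congr rfl fun j _ => min_comm _ _
  · rw [← Finset.prod_fiberwise_of_maps_to (t := Finset.range (n + 1)) (g := p)]
    · refine Finset.prod_congr rfl fun k _ => ?_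
      rw [aux_prod p k fun m => 1 - q⁻¹ ^ (m + 1)]
      congr 2
      rw [hparts, Multiset.count_map]
      simp only [eq_comm (a := k)]
      rfl
    · intro i _
      rw [Finset.mem_range, ← hsum]
      have := Finset.single_le_sum (f := p) (fun _ _ => Nat.zero_le _) (Finset.mem_univ i)
      omega
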